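/- arXiv:2208.00917 — 2 statements merged into one kernel-verified Lean document; each statement's English description precedes it below -/
import Mathlib

section
/- Let n be a positive integer and t ≥ 0. If n is even, then there exist real numbers 0 < x_1 ≤ x_2 ≤ … ≤ x_{n/2} ≤ π/2 such that for every x ∈ ℂ, Z_{n,t}(x) = Z_{n,t}(0) · ∏_{j=1}^{n/2} (sin²x_j − sin²x)/sin²x_j. If n is odd, then there exist real numbers 0 < x_1 ≤ x_2 ≤ … ≤ x_{(n−1)/2} ≤ π/2 such that for every x ∈ ℂ, Z_{n,t}(x) = Z_{n,t}(0) · cos(x) · ∏_{j=1}^{(n−1)/2} (sin²x_j − sin²x)/sin²x_j. -/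
open scoped Real

noncomputable def spin (b : Bool) : ℝ := if b then 1 else -1

/-- The Curie-Weiss partition function `Z_{n,t}(x)`. -/
noncomputable def CWZ (n : ℕ) (t x : ℂ) : ℂ :=
  ∑ σ : Fin n → Bool, Complex.exp
    (t * ((∑ j, spin (σ j) : ℝ) : ℂ) ^ 2
      + Complex.I * x * ((∑ j, spin (σ j) : ℝ) : ℂ))

/-!
In the variable `w = exp (2 i z)`, the partition function is, up to a unit, the polynomial obtained
from `(1 + w) ^ n` by multiplying the `k`-th coefficient by `exp (t (2k - n)²)`. This multiplier is
the limit of `cosh (a (2k - n)) ^ N` with `a = √(2t / N)`. Multiplying the coefficients of `p` by a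
single factor `cosh (a (2k - n))` turns `p(w)` into a weighted sum of `p(e^{2a} w)` and
`p(e^{-2a} w)`; if all roots of `p` lie on the unit circle, then away from the circle one of the two
terms dominates the other, factor by factor, so the roots stay on the circle. Hence all zeros of the
partition function are real. Being a combination of Chebyshev polynomials in `cos z` of the parity
of `n`, it equals `cos z ^ (n % 2)` times a polynomial of degree `⌊n / 2⌋` in `cos² z`; since
its zeros are real and `0` is not one of them, the roots of that polynomial lie in `[0, 1)`, where
they can be written as `cos² x_j`.
-/

open Polynomial Filter Topology

lemma multiset_prod_map_lt_prod_map_of_nonneg {ι R : Type*} [CommSemiring R] [LinearOrder R]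
    [IsStrictOrderedRing R] {s : Multiset ι} (hs : s ≠ 0) {f g : ι → R}
    (hf : ∀ i ∈ s, 0 ≤ f i) (hfg : ∀ i ∈ s, f i < g i) :
    (s.map f).prod < (s.map g).prod := by
  by_cases hpos : ∀ i ∈ s, 0 < f i
  · exact Multiset.prod_map_lt_prod_map hs f g hpos hfg
  · push Not at hpos
    obtain ⟨i, hi, hfi⟩ := hpos
    rw [Multiset.prod_eq_zero (Multiset.mem_map.2 ⟨i, hi, hfi.antisymm (hf i hi)⟩)]
    refine Multiset.prod_pos fun y hy => ?_
    obtain ⟨j, hj, rfl⟩ := Multiset.mem_map.1 hy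
    exact (hf j hj).trans_lt (hfg j hj)

section UnitCircle

variable {E : Type*} [NormedAddCommGroup E] [InnerProductSpace ℝ E]

lemma norm_smul_sub_smul_sq_sub (r s : ℝ) (w ζ : E) :
    ‖r • w - s • ζ‖ ^ 2 - ‖s • w - r • ζ‖ ^ 2 = (r ^ 2 - s ^ 2) * (‖w‖ ^ 2 - ‖ζ‖ ^ 2) := by
  simp only [norm_sub_sq_real, norm_smul, mul_pow, Real.norm_eq_abs, sq_abs, real_inner_smul_left,
    real_inner_smul_right]
  ring

lemma norm_eq_one_of_prod_norm_smul_sub_eq {r s : ℝ} (hrs : r ^ 2 ≠ s ^ 2) {S : Multiset E}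
    (hS : S ≠ 0) (hunit : ∀ ζ ∈ S, ‖ζ‖ = 1) {w : E}
    (hprod : (S.map fun ζ => ‖r • w - s • ζ‖).prod = (S.map fun ζ => ‖s • w - r • ζ‖).prod) :
    ‖w‖ = 1 := by
  by_contra hw
  have hdiff : ∀ ζ ∈ S, ‖r • w - s • ζ‖ ^ 2 - ‖s • w - r • ζ‖ ^ 2
      = (r ^ 2 - s ^ 2) * (‖w‖ ^ 2 - 1) := fun ζ hζ => by
    rw [norm_smul_sub_smul_sq_sub, hunit ζ hζ, one_pow]
  have hne : (r ^ 2 - s ^ 2) * (‖w‖ ^ 2 - 1) ≠ 0 :=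
    mul_ne_zero (sub_ne_zero.2 hrs)
      (sub_ne_zero.2 fun h => hw ((pow_eq_one_iff_of_nonneg (norm_nonneg w) two_ne_zero).1 h))
  rcases lt_or_gt_of_ne hne with hneg | hpos
  · refine (multiset_prod_map_lt_prod_map_of_nonneg hS (fun _ _ => norm_nonneg _)
      fun ζ hζ => ?_).ne hprod
    exact lt_of_pow_lt_pow_left₀ 2 (norm_nonneg _) (by linarith [hdiff ζ hζ])
  · refine (multiset_prod_map_lt_prod_map_of_nonneg hS (fun _ _ => norm_nonneg _)
      fun ζ hζ => ?_).ne hprod.symm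
    exact lt_of_pow_lt_pow_left₀ 2 (norm_nonneg _) (by linarith [hdiff ζ hζ])

end UnitCircle

section Hadamard

variable {R : Type*} [Semiring R]

/-- The Hadamard product of the polynomial `p` with the sequence `c`: every coefficient `p.coeff k`
is multiplied by `c k`. Such coefficient multipliers encode the operators of the Lee-Yang argument,
which are diagonal in the powers of `X`. -/
noncomputable def hadamard (c : ℕ → R) (p : R[X]) : R[X] :=
  p.sum fun k a => monomial k (c k * a)

@[simp]
lemma coeff_hadamard (c : ℕ → R) (p : R[X]) (k : ℕ) :
    (hadamard c p).coeff k = c k * p.coeff k := by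
  rw [hadamard, Polynomial.sum, finsetSum_coeff]
  simp +contextual [coeff_monomial]

lemma natDegree_hadamard_le (c : ℕ → R) (p : R[X]) :
    (hadamard c p).natDegree ≤ p.natDegree :=
  natDegree_le_iff_coeff_eq_zero.2 fun k hk => by
    rw [coeff_hadamard, coeff_eq_zero_of_natDegree_lt hk, mul_zero]

lemma natDegree_hadamard [NoZeroDivisors R] {c : ℕ → R} (hc : ∀ k, c k ≠ 0) (p : R[X]) :
    (hadamard c p).natDegree = p.natDegree := by
  refine (natDegree_hadamard_le c p).antisymm ?_
  rcases eq_or_ne p 0 with rfl | hp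
  · simp
  · refine le_natDegree_of_ne_zero ?_
    rw [coeff_hadamard]
    exact mul_ne_zero (hc _) (leadingCoeff_ne_zero.2 hp)

lemma hadamard_one (p : R[X]) : hadamard (fun _ => 1) p = p := by
  ext k
  simp

lemma hadamard_hadamard (c d : ℕ → R) (p : R[X]) :
    hadamard c (hadamard d p) = hadamard (fun k => c k * d k) p := by
  ext k
  simp [mul_assoc]

lemma eval_hadamard (c : ℕ → R) (p : R[X]) (x : R) :
    (hadamard c p).eval x
      = ∑ k ∈ Finset.range (p.natDegree + 1), c k * p.coeff k * x ^ k := by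
  rw [eval_eq_sum_range' (Nat.lt_succ_of_le (natDegree_hadamard_le c p))]
  simp only [coeff_hadamard]

end Hadamard

/-- The polynomial `p` satisfies the conclusion of the Lee-Yang theorem: its roots have modulus `1`.
The zero polynomial qualifies, as its multiset of roots is empty. -/
def RootsOnUnitCircle (p : ℂ[X]) : Prop :=
  ∀ ζ ∈ p.roots, ‖ζ‖ = 1

lemma pow_natDegree_mul_eval_div {K : Type*} [Field K] {p : K[X]} (hp : p.Splits) {s : K}
    (hs : s ≠ 0) (x : K) :
    s ^ p.natDegree * p.eval (x / s)
      = p.leadingCoeff * (p.roots.map fun ζ => x - s * ζ).prod := by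
  have hpow : s ^ p.natDegree = (p.roots.map fun _ => s).prod := by
    simp [hp.natDegree_eq_card_roots]
  rw [hp.eval_eq_prod_roots, hpow, mul_left_comm, ← Multiset.prod_map_mul]
  congr 3
  ext ζ
  field_simp

lemma norm_multiset_prod_map {ι 𝕜 : Type*} [NormedField 𝕜] (s : Multiset ι) (f : ι → 𝕜) :
    ‖(s.map f).prod‖ = (s.map fun i => ‖f i‖).prod := by
  simpa [Multiset.map_map] using map_multiset_prod (normHom : 𝕜 →*₀ ℝ) (s.map f)

lemma two_mul_eval_hadamard_cosh (p : ℂ[X]) (a w : ℂ) :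
    2 * (hadamard (fun k => Complex.cosh (a * (2 * k - p.natDegree))) p).eval w
      = Complex.exp (-a) ^ p.natDegree * p.eval (Complex.exp a * w / Complex.exp (-a))
        + Complex.exp a ^ p.natDegree * p.eval (Complex.exp (-a) * w / Complex.exp a) := by
  rw [eval_hadamard]
  simp only [eval_eq_sum_range, Finset.mul_sum, ← Finset.sum_add_distrib]
  refine Finset.sum_congr rfl fun k _ => ?_
  have hplus : Complex.exp (a * (2 * k - p.natDegree))
      = Complex.exp (-a) ^ p.natDegree * (Complex.exp a / Complex.exp (-a)) ^ k := by
    rw [← Complex.exp_sub, ← Complex.exp_nat_mul, ← Complex.exp_nat_mul, ← Complex.exp_add]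
    ring_nf
  have hminus : Complex.exp (-(a * (2 * k - p.natDegree)))
      = Complex.exp a ^ p.natDegree * (Complex.exp (-a) / Complex.exp a) ^ k := by
    rw [← Complex.exp_sub, ← Complex.exp_nat_mul, ← Complex.exp_nat_mul, ← Complex.exp_add]
    ring_nf
  rw [Complex.cosh, hplus, hminus, mul_div_right_comm, mul_div_right_comm, mul_pow, mul_pow]
  ring

lemma one_add_sq_div_two_le_cosh (y : ℝ) : 1 + y ^ 2 / 2 ≤ Real.cosh y := by
  have hcosh : Real.cosh y = 1 + 2 * Real.sinh (y / 2) ^ 2 := by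
    have h := Real.cosh_two_mul (y / 2)
    rw [Real.cosh_sq, mul_div_cancel₀ y two_ne_zero] at h
    linarith
  have hsinh : (y / 2) ^ 2 ≤ Real.sinh (y / 2) ^ 2 := by
    rw [sq_le_sq, Real.abs_sinh]
    exact Real.self_le_sinh_iff.2 (abs_nonneg _)
  linarith [div_pow y 2 2]

lemma tendsto_cosh_sqrt_mul_pow {t : ℝ} (ht : 0 ≤ t) (s : ℝ) :
    Tendsto (fun N : ℕ => Real.cosh (√(2 * t / N) * s) ^ N) atTop (𝓝 (Real.exp (t * s ^ 2))) := by
  have hsq : ∀ N : ℕ, (√(2 * t / N) * s) ^ 2 / 2 = t * s ^ 2 / N := fun N => by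
    rw [mul_pow, Real.sq_sqrt (by positivity)]
    ring
  refine tendsto_of_tendsto_of_tendsto_of_le_of_le' (Real.tendsto_one_add_div_pow_exp (t * s ^ 2))
    tendsto_const_nhds (Eventually.of_forall fun N => ?_) ?_
  · exact pow_le_pow_left₀ (by positivity) (hsq N ▸ one_add_sq_div_two_le_cosh _) N
  · filter_upwards [eventually_ne_atTop 0] with N hN
    calc Real.cosh (√(2 * t / N) * s) ^ N
      _ ≤ Real.exp (t * s ^ 2 / N) ^ N :=
        pow_le_pow_left₀ (Real.cosh_pos _).le (hsq N ▸ Real.cosh_le_exp_half_sq _) N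
      _ = Real.exp (t * s ^ 2) := by
        rw [← Real.exp_nat_mul, mul_div_cancel₀ _ (Nat.cast_ne_zero.2 hN)]

lemma natDegree_hadamard_cosh_pow (p : ℂ[X]) (a : ℝ) (N : ℕ) :
    (hadamard (fun k => Complex.cosh (a * (2 * k - p.natDegree)) ^ N) p).natDegree
      = p.natDegree :=
  natDegree_hadamard (fun k => pow_ne_zero N
    (by exact_mod_cast (Real.cosh_pos (a * (2 * k - p.natDegree))).ne')) p

namespace RootsOnUnitCircle

variable {p : ℂ[X]}

lemma hadamard_cosh (hp : RootsOnUnitCircle p) (a : ℝ) :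
    RootsOnUnitCircle (hadamard (fun k => Complex.cosh (a * (2 * k - p.natDegree))) p) := by
  rcases eq_or_ne a 0 with rfl | ha
  · simpa [hadamard_one] using hp
  intro w hw
  have hsp := IsAlgClosed.splits p
  have hdeg : p.natDegree ≠ 0 := fun h => by
    rw [mem_roots', IsRoot, eq_C_of_natDegree_le_zero ((natDegree_hadamard_le _ p).trans h.le),
      eval_C] at hw
    exact hw.1 (by rw [hw.2, C_0])
  have hroots : p.roots ≠ 0 := by
    rwa [← Multiset.card_pos, ← hsp.natDegree_eq_card_roots, pos_iff_ne_zero]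
  have hlc : p.leadingCoeff ≠ 0 := leadingCoeff_ne_zero.2 (ne_zero_of_natDegree_gt hdeg.bot_lt)
  have hsum := two_mul_eval_hadamard_cosh p a w
  rw [(mem_roots'.1 hw).2.eq_zero, mul_zero, pow_natDegree_mul_eval_div hsp (Complex.exp_ne_zero _),
    pow_natDegree_mul_eval_div hsp (Complex.exp_ne_zero _), ← mul_add] at hsum
  have hnorm := congrArg norm
    (eq_neg_of_add_eq_zero_left ((mul_eq_zero.1 hsum.symm).resolve_left hlc))
  rw [norm_neg, norm_multiset_prod_map, norm_multiset_prod_map] at hnorm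
  refine norm_eq_one_of_prod_norm_smul_sub_eq (r := Real.exp a) (s := Real.exp (-a)) ?_ hroots hp ?_
  · rw [Ne, pow_left_inj₀ (Real.exp_pos _).le (Real.exp_pos _).le two_ne_zero, Real.exp_eq_exp]
    exact fun h => ha (self_eq_neg.1 h)
  · simpa only [Complex.real_smul, Complex.ofReal_exp, Complex.ofReal_neg] using hnorm

lemma norm_leadingCoeff_mul_pow_le (hp : RootsOnUnitCircle p) (w : ℂ) :
    ‖p.leadingCoeff‖ * |‖w‖ - 1| ^ p.natDegree ≤ ‖p.eval w‖ := by
  have hsp := IsAlgClosed.splits p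
  have hpow : |‖w‖ - 1| ^ p.natDegree = (p.roots.map fun _ => |‖w‖ - 1|).prod := by
    simp [hsp.natDegree_eq_card_roots]
  rw [hsp.eval_eq_prod_roots, norm_mul, norm_multiset_prod_map, hpow]
  gcongr
  refine Multiset.prod_map_le_prod_map₀ _ _ (fun _ _ => abs_nonneg _) fun ζ hζ => ?_
  rw [← hp ζ hζ]
  exact abs_norm_sub_norm_le w ζ

lemma of_tendsto {ι : Type*} {l : Filter ι} [l.NeBot] {P : ι → ℂ[X]}
    (hP : ∀ i, RootsOnUnitCircle (P i)) (hdeg : ∀ i, (P i).natDegree = p.natDegree)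
    (hlim : ∀ k, Tendsto (fun i => (P i).coeff k) l (𝓝 (p.coeff k))) :
    RootsOnUnitCircle p := by
  intro w hw
  obtain ⟨hp0, hroot⟩ := mem_roots'.1 hw
  have heval : Tendsto (fun i => (P i).eval w) l (𝓝 0) := by
    rw [← hroot.eq_zero]
    simp only [eval_eq_sum_range, hdeg]
    exact tendsto_finsetSum _ fun k _ => (hlim k).mul_const _
  have hbound : ‖p.leadingCoeff‖ * |‖w‖ - 1| ^ p.natDegree ≤ ‖(0 : ℂ)‖ := by
    refine le_of_tendsto_of_tendsto' ((hlim p.natDegree).norm.mul_const _) heval.norm fun i => ?_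
    simpa only [leadingCoeff, hdeg] using (hP i).norm_leadingCoeff_mul_pow_le w
  rw [norm_zero] at hbound
  have hpow : |‖w‖ - 1| ^ p.natDegree = 0 :=
    (nonpos_of_mul_nonpos_right hbound (norm_pos_iff.2 (leadingCoeff_ne_zero.2 hp0))).antisymm
      (by positivity)
  exact sub_eq_zero.1 (abs_eq_zero.1 (eq_zero_of_pow_eq_zero hpow))

lemma hadamard_cosh_pow (hp : RootsOnUnitCircle p) (a : ℝ) (N : ℕ) :
    RootsOnUnitCircle
      (hadamard (fun k => Complex.cosh (a * (2 * k - p.natDegree)) ^ N) p) := by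
  induction N with
  | zero => simpa only [pow_zero, hadamard_one] using hp
  | succ N ih =>
    have h := ih.hadamard_cosh a
    rw [natDegree_hadamard_cosh_pow, hadamard_hadamard] at h
    simpa only [pow_succ'] using h

theorem hadamard_exp_mul_sq (hp : RootsOnUnitCircle p) {t : ℝ} (ht : 0 ≤ t) :
    RootsOnUnitCircle (hadamard (fun k => Complex.exp (t * (2 * k - p.natDegree) ^ 2)) p) := by
  refine of_tendsto (l := atTop) (fun N : ℕ => hp.hadamard_cosh_pow √(2 * t / N) N)
    (fun N => ?_) fun k => ?_
  · rw [natDegree_hadamard_cosh_pow, natDegree_hadamard fun k => Complex.exp_ne_zero _]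
  · simp only [coeff_hadamard]
    refine Tendsto.mul_const _ ?_
    exact_mod_cast (Complex.continuous_ofReal.tendsto _).comp
      (tendsto_cosh_sqrt_mul_pow ht (2 * k - p.natDegree))

end RootsOnUnitCircle

lemma sum_spin_comp (n : ℕ) (s : Finset (Fin n)) :
    ∑ j, spin (decide (j ∈ s)) = 2 * s.card - n := by
  have hspin : ∀ j, spin (decide (j ∈ s)) = 2 * (if j ∈ s then 1 else 0) - 1 := fun j => by
    by_cases hj : j ∈ s <;> norm_num [spin, hj]
  simp [hspin, mul_comm]

lemma sum_apply_sum_spin {M : Type*} [AddCommMonoid M] (n : ℕ) (f : ℝ → M) :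
    ∑ σ : Fin n → Bool, f (∑ j, spin (σ j))
      = ∑ k ∈ Finset.range (n + 1), n.choose k • f (2 * k - n) := by
  have hbij : Function.Bijective fun (s : Finset (Fin n)) (j : Fin n) => decide (j ∈ s) := by
    refine ⟨fun s s' h => ?_, fun σ => ⟨Finset.univ.filter fun j => σ j, by ext; simp⟩⟩
    ext j
    simpa using congrFun h j
  have hcard := Finset.sum_powerset_apply_card (x := (Finset.univ : Finset (Fin n)))
    fun k => f (2 * k - n)
  rw [Finset.powerset_univ, Finset.card_univ, Fintype.card_fin] at hcard
  rw [← hcard, ← Fintype.sum_bijective _ hbij _ _ fun _ => rfl]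
  simp only [sum_spin_comp]

lemma CWZ_neg (n : ℕ) (t z : ℂ) : CWZ n t (-z) = CWZ n t z := by
  have hflip : ∀ b, spin (!b) = -spin b := fun b => by cases b <;> simp [spin]
  refine Fintype.sum_equiv (Equiv.piCongrRight fun _ => Equiv.boolNot) _ _ fun σ => ?_
  simp [hflip]

lemma CWZ_eq_sum_choose (n : ℕ) (t z : ℂ) :
    CWZ n t z = ∑ k ∈ Finset.range (n + 1), n.choose k *
      Complex.exp (t * (2 * k - n) ^ 2 + Complex.I * z * (2 * k - n)) := by
  have h := sum_apply_sum_spin n fun S : ℝ => Complex.exp (t * (S : ℂ) ^ 2 + Complex.I * z * S)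
  rw [CWZ, h]
  push_cast
  simp only [nsmul_eq_mul]

lemma CWZ_eq_sum_cos (n : ℕ) (t z : ℂ) :
    CWZ n t z = ∑ k ∈ Finset.range (n + 1),
      n.choose k * Complex.exp (t * (2 * k - n) ^ 2) * Complex.cos ((2 * k - n) * z) := by
  have hsymm : CWZ n t z = (CWZ n t z + CWZ n t (-z)) / 2 := by
    rw [CWZ_neg, add_self_div_two]
  rw [hsymm, CWZ_eq_sum_choose, CWZ_eq_sum_choose, ← Finset.sum_add_distrib, Finset.sum_div]
  refine Finset.sum_congr rfl fun k _ => ?_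
  rw [Complex.exp_add, Complex.exp_add, Complex.cos]
  ring_nf

lemma natDegree_one_add_X_pow (n : ℕ) : ((1 + X : ℂ[X]) ^ n).natDegree = n := by
  rw [natDegree_pow, ← C_1, add_comm, natDegree_X_add_C, mul_one]

lemma rootsOnUnitCircle_one_add_X_pow (n : ℕ) : RootsOnUnitCircle ((1 + X) ^ n) := by
  intro ζ hζ
  have hpow : (1 + ζ) ^ n = 0 := by simpa using (mem_roots'.1 hζ).2
  rw [eq_neg_of_add_eq_zero_right (eq_zero_of_pow_eq_zero hpow), norm_neg, norm_one]

lemma CWZ_eq_exp_mul_eval_hadamard (n : ℕ) (t z : ℂ) :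
    CWZ n t z = Complex.exp (-(n * (Complex.I * z)))
      * (hadamard (fun k => Complex.exp (t * (2 * k - n) ^ 2)) ((1 + X) ^ n)).eval
        (Complex.exp (2 * (Complex.I * z))) := by
  rw [CWZ_eq_sum_choose, eval_hadamard, natDegree_one_add_X_pow, Finset.mul_sum]
  refine Finset.sum_congr rfl fun k _ => ?_
  have hexp : Complex.exp (Complex.I * z * (2 * k - n))
      = Complex.exp (-(n * (Complex.I * z))) * Complex.exp (2 * (Complex.I * z)) ^ k := by
    rw [← Complex.exp_nat_mul, ← Complex.exp_add]
    ring_nf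
  rw [coeff_one_add_X_pow, Complex.exp_add, hexp]
  ring

lemma im_eq_zero_of_CWZ_eq_zero {n : ℕ} {t : ℝ} (ht : 0 ≤ t) {z : ℂ} (hz : CWZ n t z = 0) :
    z.im = 0 := by
  have hroots := (rootsOnUnitCircle_one_add_X_pow n).hadamard_exp_mul_sq ht
  rw [natDegree_one_add_X_pow] at hroots
  have hne : hadamard (fun k => Complex.exp (t * (2 * k - n) ^ 2)) ((1 + X : ℂ[X]) ^ n) ≠ 0 := by
    intro h
    have h0 := congrArg (coeff · 0) h
    simp [coeff_one_add_X_pow] at h0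
  rw [CWZ_eq_exp_mul_eval_hadamard] at hz
  have hnorm := hroots _ (mem_roots'.2
    ⟨hne, (mul_eq_zero.1 hz).resolve_left (Complex.exp_ne_zero _)⟩)
  rw [Complex.norm_exp, Real.exp_eq_one_iff] at hnorm
  simpa using hnorm

lemma CWZ_zero_ne_zero (n : ℕ) (t : ℝ) : CWZ n t 0 ≠ 0 := by
  have hreal : CWZ n t 0
      = ((∑ σ : Fin n → Bool, Real.exp (t * (∑ j, spin (σ j)) ^ 2) : ℝ) : ℂ) := by
    simp [CWZ]
  rw [hreal, Complex.ofReal_ne_zero]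
  positivity

lemma chebyshev_T_coeff_eq_zero {R : Type*} [CommRing R] {n : ℤ} {k : ℕ} (h : Odd (n + k)) :
    (Chebyshev.T R n).coeff k = 0 := by
  induction n using Chebyshev.induct' generalizing k with
  | zero =>
    rw [Chebyshev.T_zero, coeff_one, if_neg]
    rintro rfl
    simp at h
  | one =>
    rw [Chebyshev.T_one, coeff_X, if_neg]
    rintro rfl
    exact absurd h (by decide)
  | add_two n ih1 ih2 =>
    rw [Chebyshev.T_add_two, coeff_sub, ih2 (by grind), sub_zero, mul_assoc, coeff_ofNat_mul]
    cases k with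
    | zero => simp
    | succ k => rw [coeff_X_mul, ih1 (by grind), mul_zero]
  | neg n ih =>
    rw [Chebyshev.T_neg]
    exact ih (by grind)

lemma exists_eq_X_pow_mul_expand {R : Type*} [CommSemiring R] {p r : ℕ} (hp : 0 < p) {f : R[X]}
    (hf : ∀ k, f.coeff k ≠ 0 → k % p = r) :
    ∃ g : R[X], f = X ^ r * expand R p g := by
  obtain ⟨h, rfl⟩ : X ^ r ∣ f := X_pow_dvd_iff.2 fun d hd => by
    by_contra hne
    exact (hf d hne).not_lt ((Nat.mod_le d p).trans_lt hd)
  refine ⟨contract p h, ?_⟩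
  congr 1
  ext k
  rw [coeff_expand hp]
  split_ifs with hk
  · rw [coeff_contract hp.ne', Nat.div_mul_cancel hk]
  · by_contra hne
    have hmod := hf (k + r) (by rwa [coeff_X_pow_mul])
    exact hk ((Nat.modEq_zero_iff_dvd).1 (Nat.ModEq.add_right_cancel' r (by
      rw [Nat.ModEq, zero_add, hmod, Nat.mod_eq_of_lt (hmod ▸ Nat.mod_lt _ hp)])))

/-- The Chebyshev form of a trigonometric sum: its value at `cos z` is
`∑ k ≤ n, b k * cos ((2 * k - n) * z)`. -/
noncomputable def chebyshevSum (n : ℕ) (b : ℕ → ℝ) : ℝ[X] :=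
  ∑ k ∈ Finset.range (n + 1), C (b k) * Chebyshev.T ℝ (2 * k - n)

lemma aeval_cos_chebyshevSum (n : ℕ) (b : ℕ → ℝ) (z : ℂ) :
    aeval (Complex.cos z) (chebyshevSum n b)
      = ∑ k ∈ Finset.range (n + 1), b k * Complex.cos ((2 * k - n) * z) := by
  simp [chebyshevSum, Chebyshev.aeval_T]

lemma mod_two_eq_of_coeff_chebyshevSum_ne_zero {n : ℕ} {b : ℕ → ℝ} {j : ℕ}
    (h : (chebyshevSum n b).coeff j ≠ 0) : j % 2 = n % 2 := by
  contrapose! h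
  rw [chebyshevSum, finsetSum_coeff]
  refine Finset.sum_eq_zero fun k _ => ?_
  rw [coeff_C_mul, chebyshev_T_coeff_eq_zero (by grind), mul_zero]

lemma natDegree_chebyshevSum_le (n : ℕ) (b : ℕ → ℝ) : (chebyshevSum n b).natDegree ≤ n :=
  natDegree_sum_le_of_forall_le _ _ fun k hk => (natDegree_C_mul_le _ _).trans (by
    rw [Chebyshev.natDegree_T]
    grind)

lemma coeff_chebyshev_T_nonneg {j : ℤ} {n : ℕ} (h : j.natAbs ≤ n) :
    0 ≤ (Chebyshev.T ℝ j).coeff n := by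
  rw [← Chebyshev.natDegree_T ℝ] at h
  rcases h.eq_or_lt with rfl | hlt
  · rw [coeff_natDegree, Chebyshev.leadingCoeff_T]
    positivity
  · exact (coeff_eq_zero_of_natDegree_lt hlt).ge

lemma coeff_chebyshevSum_self_pos {n : ℕ} {b : ℕ → ℝ} (hb : ∀ k, 0 ≤ b k) (hbn : 0 < b n) :
    0 < (chebyshevSum n b).coeff n := by
  have hlead : 0 < (Chebyshev.T ℝ (n : ℤ)).coeff n := by
    have h := Chebyshev.leadingCoeff_T ℝ (n : ℤ)
    rw [leadingCoeff, Chebyshev.natDegree_T, Int.natAbs_natCast] at h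
    rw [h]
    positivity
  simp only [chebyshevSum, finsetSum_coeff, coeff_C_mul]
  refine Finset.sum_pos' (fun k hk => mul_nonneg (hb k) (coeff_chebyshev_T_nonneg (by grind)))
    ⟨n, Finset.self_mem_range_succ n, mul_pos hbn ?_⟩
  rwa [two_mul, add_sub_cancel_right]

lemma exists_sum_mul_cos_eq_eval_cos_sq {n : ℕ} {b : ℕ → ℝ} (hb : ∀ k, 0 ≤ b k)
    (hbn : 0 < b n) :
    ∃ Q : ℂ[X], Q.natDegree = n / 2 ∧
      ∀ z : ℂ, ∑ k ∈ Finset.range (n + 1), b k * Complex.cos ((2 * k - n) * z)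
        = Complex.cos z ^ (n % 2) * Q.eval (Complex.cos z ^ 2) := by
  obtain ⟨g, hg⟩ := exists_eq_X_pow_mul_expand two_pos fun k =>
    mod_two_eq_of_coeff_chebyshevSum_ne_zero (n := n) (b := b) (j := k)
  have hlead := (coeff_chebyshevSum_self_pos hb hbn).ne'
  have hdeg := natDegree_eq_of_le_of_coeff_ne_zero (natDegree_chebyshevSum_le n b) hlead
  have hexpand : expand ℝ 2 g ≠ 0 := by
    intro h
    rw [hg, h, mul_zero, coeff_zero] at hlead
    exact hlead rfl
  rw [hg, natDegree_X_pow_mul _ hexpand, natDegree_expand] at hdeg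
  refine ⟨g.map (algebraMap ℝ ℂ), ?_, fun z => ?_⟩
  · rw [natDegree_map]
    omega
  · rw [← aeval_cos_chebyshevSum, hg, map_mul, map_pow, aeval_X, expand_aeval,
      eval_map_algebraMap]

lemma exists_monotoneOn_map_Icc_eq {α : Type*} [LinearOrder α] [Inhabited α] (s : Multiset α) :
    ∃ x : ℕ → α, MonotoneOn x (Set.Icc 1 s.card) ∧ (Finset.Icc 1 s.card).val.map x = s := by
  let L := s.sort
  have hL : (L : Multiset α) = s := s.sort_eq (· ≤ ·)
  have hcard : s.card = L.length := by rw [← hL, Multiset.coe_card]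
  refine ⟨fun k => L.getD (k - 1) default, fun i hi j hj hij => ?_, ?_⟩
  · rw [hcard] at hi hj
    have hi' : i - 1 < L.length := by grind
    have hj' : j - 1 < L.length := by grind
    simp only [List.getD_eq_getElem _ _ hi', List.getD_eq_getElem _ _ hj']
    exact (Multiset.pairwise_sort s _).sortedLE.getElem_le_getElem_of_le (by omega)
  · have hlist : (List.range' 1 L.length).map (fun k => L.getD (k - 1) default) = L :=
      List.ext_getElem (by simp) fun i _ hi => by simp [hi]
    rw [hcard]
    exact (congrArg Multiset.ofList hlist).trans hL

lemma eval_eq_eval_mul_prod_div {K : Type*} [Field K] {p : K[X]} (hp : p.Splits) {a : K}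
    (ha : p.eval a ≠ 0) (x : K) :
    p.eval x = p.eval a * (p.roots.map fun q => (x - q) / (a - q)).prod := by
  rw [hp.eval_eq_prod_roots a] at ha ⊢
  rw [hp.eval_eq_prod_roots x, Multiset.prod_map_div, mul_assoc,
    mul_div_cancel₀ _ (right_ne_zero_of_mul ha)]

lemma exists_sin_sq_eq_one_sub {p : ℂ[X]} (hp1 : p.eval 1 ≠ 0)
    (hreal : ∀ z : ℂ, p.eval (Complex.cos z ^ 2) = 0 → z.im = 0) {q : ℂ} (hq : q ∈ p.roots) :
    ∃ x : ℝ, (0 < x ∧ x ≤ π / 2) ∧ ((Real.sin x ^ 2 : ℝ) : ℂ) = 1 - q := by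
  have hq0 : p.eval q = 0 := (mem_roots'.1 hq).2
  obtain ⟨c, rfl⟩ := IsAlgClosed.exists_pow_nat_eq q two_pos
  obtain ⟨z, rfl⟩ := Complex.cos_surjective c
  obtain ⟨r, rfl⟩ : ∃ r : ℝ, (r : ℂ) = z := ⟨z.re, Complex.ext rfl (hreal z hq0).symm⟩
  have hsin : Real.sin r ≠ 0 := fun h => hp1 (by
    rwa [Complex.cos_sq', ← Complex.ofReal_sin, h, Complex.ofReal_zero, zero_pow two_ne_zero,
      sub_zero] at hq0)
  refine ⟨Real.arcsin |Real.sin r|,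
    ⟨Real.arcsin_pos.2 (abs_pos.2 hsin), Real.arcsin_le_pi_div_two _⟩, ?_⟩
  rw [Real.sin_arcsin (by linarith [abs_nonneg (Real.sin r)]) (Real.abs_sin_le_one r), sq_abs,
    Complex.ofReal_pow, Complex.ofReal_sin, Complex.sin_sq]

theorem exists_sin_sq_factorization {p : ℂ[X]} (hp1 : p.eval 1 ≠ 0)
    (hreal : ∀ z : ℂ, p.eval (Complex.cos z ^ 2) = 0 → z.im = 0) :
    ∃ x : ℕ → ℝ,
      (∀ k ∈ Finset.Icc 1 p.natDegree, 0 < x k ∧ x k ≤ π / 2) ∧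
      MonotoneOn x (Set.Icc 1 p.natDegree) ∧
      ∀ z : ℂ, p.eval (Complex.cos z ^ 2) = p.eval 1 *
        ∏ j ∈ Finset.Icc 1 p.natDegree,
          (((Real.sin (x j) ^ 2 : ℝ) : ℂ) - Complex.sin z ^ 2)
            / ((Real.sin (x j) ^ 2 : ℝ) : ℂ) := by
  have hsp := IsAlgClosed.splits p
  choose! θ hθ hsin using fun q => exists_sin_sq_eq_one_sub hp1 hreal (q := q)
  obtain ⟨x, hmono, hx⟩ := exists_monotoneOn_map_Icc_eq (p.roots.map θ)
  rw [Multiset.card_map, ← hsp.natDegree_eq_card_roots] at hmono hx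
  refine ⟨x, fun k hk => ?_, hmono, fun z => ?_⟩
  · have hmem : x k ∈ p.roots.map θ := hx ▸ Multiset.mem_map_of_mem x hk
    obtain ⟨q, hq, hqk⟩ := Multiset.mem_map.1 hmem
    exact hqk ▸ hθ q hq
  · let F : ℝ → ℂ := fun y =>
      (((Real.sin y ^ 2 : ℝ) : ℂ) - Complex.sin z ^ 2) / ((Real.sin y ^ 2 : ℝ) : ℂ)
    have hF : ∀ q ∈ p.roots, (Complex.cos z ^ 2 - q) / (1 - q) = F (θ q) := fun q hq => by
      simp only [F, hsin q hq, Complex.cos_sq', sub_right_comm]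
    calc p.eval (Complex.cos z ^ 2)
      _ = p.eval 1 * ((p.roots.map θ).map F).prod := by
        rw [eval_eq_eval_mul_prod_div hsp hp1, Multiset.map_congr rfl hF, Multiset.map_map]
        rfl
      _ = p.eval 1 * ∏ j ∈ Finset.Icc 1 p.natDegree, F (x j) := by
        rw [← hx, Multiset.map_map]
        rfl

theorem exists_CWZ_eq_prod (n : ℕ) {t : ℝ} (ht : 0 ≤ t) :
    ∃ x : ℕ → ℝ,
      (∀ k ∈ Finset.Icc 1 (n / 2), 0 < x k ∧ x k ≤ π / 2) ∧
      (∀ k, 1 ≤ k → k < n / 2 → x k ≤ x (k + 1)) ∧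
      ∀ z : ℂ, CWZ n t z
        = CWZ n t 0 * Complex.cos z ^ (n % 2) *
          ∏ j ∈ Finset.Icc 1 (n / 2),
            (((Real.sin (x j) ^ 2 : ℝ) : ℂ) - Complex.sin z ^ 2)
              / ((Real.sin (x j) ^ 2 : ℝ) : ℂ) := by
  obtain ⟨Q, hdeg, hQ⟩ := exists_sum_mul_cos_eq_eval_cos_sq (n := n)
    (b := fun k => n.choose k * Real.exp (t * (2 * k - n) ^ 2)) (fun k => by positivity)
    (by rw [Nat.choose_self]; positivity)
  have hCWZ : ∀ z, CWZ n t z = Complex.cos z ^ (n % 2) * Q.eval (Complex.cos z ^ 2) := fun z => by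
    rw [← hQ, CWZ_eq_sum_cos]
    push_cast
    rfl
  have hzero : CWZ n t 0 = Q.eval 1 := by simp [hCWZ]
  obtain ⟨x, hmem, hmono, hprod⟩ := exists_sin_sq_factorization (hzero ▸ CWZ_zero_ne_zero n t)
    fun z hz => im_eq_zero_of_CWZ_eq_zero ht (by rw [hCWZ, hz, mul_zero])
  rw [hdeg] at hmem hmono hprod
  refine ⟨x, hmem, fun k hk hkn => hmono ⟨hk, hkn.le⟩ ⟨by omega, hkn⟩ k.le_succ, fun z => ?_⟩
  rw [hCWZ z, hzero, hprod, mul_assoc, mul_left_comm]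

theorem stmt14 (n : ℕ) (hn : 0 < n) (t : ℝ) (ht : 0 ≤ t) :
    (Even n → ∃ x : ℕ → ℝ,
      (∀ k ∈ Finset.Icc 1 (n / 2), 0 < x k ∧ x k ≤ π / 2) ∧
      (∀ k, 1 ≤ k → k < n / 2 → x k ≤ x (k + 1)) ∧
      ∀ z : ℂ, CWZ n t z
        = CWZ n t 0 *
          ∏ j ∈ Finset.Icc 1 (n / 2),
            (((Real.sin (x j) ^ 2 : ℝ) : ℂ) - Complex.sin z ^ 2)
              / ((Real.sin (x j) ^ 2 : ℝ) : ℂ)) ∧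
    (Odd n → ∃ x : ℕ → ℝ,
      (∀ k ∈ Finset.Icc 1 ((n - 1) / 2), 0 < x k ∧ x k ≤ π / 2) ∧
      (∀ k, 1 ≤ k → k < (n - 1) / 2 → x k ≤ x (k + 1)) ∧
      ∀ z : ℂ, CWZ n t z
        = CWZ n t 0 * Complex.cos z *
          ∏ j ∈ Finset.Icc 1 ((n - 1) / 2),
            (((Real.sin (x j) ^ 2 : ℝ) : ℂ) - Complex.sin z ^ 2)
              / ((Real.sin (x j) ^ 2 : ℝ) : ℂ)) := by
  obtain ⟨x, hmem, hmono, hprod⟩ := exists_CWZ_eq_prod n ht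
  refine ⟨fun heven => ⟨x, hmem, hmono, ?_⟩, fun hodd => ⟨x, ?_⟩⟩
  · simpa only [Nat.even_iff.1 heven, pow_zero, mul_one] using hprod
  · have hhalf : (n - 1) / 2 = n / 2 := by grind
    rw [hhalf]
    exact ⟨hmem, hmono, by simpa only [Nat.odd_iff.1 hodd, pow_one] using hprod⟩
end

section
/- Let n be a positive integer and t > 0. If n is even, then the set {x ∈ (0,π/2) : Z_{n,t}(x) = 0} has exactly n/2 elements and Z_{n,t}(π/2) ≠ 0. If n is odd, then the set {x ∈ (0,π/2) : Z_{n,t}(x) = 0} has exactly (n−1)/2 elements and Z_{n,t}(π/2) = 0. -/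
open scoped Real

/-!
Write `Z_{n,t}(x) = exp(t n² - i n x) p(exp(2ix))` and `q = exp(-4t) < 1`. Adding one spin replaces
the polynomial `p`, of degree `n`, by `p(qX) + qⁿ X p(X/q)`. If all roots of `p` lie on the unit
circle, then `|qⁿ p(w/q)| ≤ |p(qw)|` for `|w| ≤ 1` and the reverse holds for `|w| ≥ 1`, so the roots
of the new polynomial lie on the circle as well; comparing the real parts of the logarithmic
derivatives of the two summands shows that they are simple. Hence `p` always has `n` distinct roots
on the circle. None of them is `1`, and conjugation pairs the non-real ones, so half of the roots
other than `-1` have the form `exp(2ix)` with `0 < x < π/2`. The root `-1`, which corresponds to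
`x = π/2`, is present exactly when `n` is odd.
-/

open Polynomial

theorem re_div_sub_eq {w a : ℂ} (h : w ≠ a) :
    (w / (w - a)).re = 1 / 2 + (‖w‖ ^ 2 - ‖a‖ ^ 2) / (2 * ‖w - a‖ ^ 2) := by
  have hd : Complex.normSq (w - a) ≠ 0 := Complex.normSq_eq_zero.not.2 (sub_ne_zero.2 h)
  rw [Complex.div_re, ← Complex.normSq_eq_norm_sq, ← Complex.normSq_eq_norm_sq,
    ← Complex.normSq_eq_norm_sq]
  field_simp
  simp only [Complex.normSq_apply, Complex.sub_re, Complex.sub_im]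
  ring

theorem re_mul_eval_derivative_div_eval {p : ℂ[X]} {w : ℂ} (hw : p.eval w ≠ 0) :
    (w * (p.derivative.eval w / p.eval w)).re = (p.roots.map fun a ↦ (w / (w - a)).re).sum := by
  rw [(IsAlgClosed.splits p).eval_derivative_div_eval_of_ne_zero hw, ← Multiset.sum_map_mul_left,
    ← Complex.reLm_coe, map_multiset_sum, Multiset.map_map]
  simp only [Function.comp_def, mul_one_div]

theorem re_mul_eval_derivative_div_eval_le {p : ℂ[X]} {w : ℂ} (hw : p.eval w ≠ 0)
    (h : ∀ a ∈ p.roots, ‖w‖ ≤ ‖a‖) :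
    (w * (p.derivative.eval w / p.eval w)).re ≤ p.natDegree / 2 := by
  rw [re_mul_eval_derivative_div_eval hw, (IsAlgClosed.splits p).natDegree_eq_card_roots]
  refine (Multiset.sum_le_card_nsmul _ (1 / 2) ?_).trans_eq (by simp [div_eq_mul_inv])
  simp only [Multiset.forall_mem_map_iff]
  intro a ha
  have hne : w ≠ a := fun hwa ↦ hw (hwa ▸ isRoot_of_mem_roots ha)
  rw [re_div_sub_eq hne, add_le_iff_nonpos_right]
  have := pow_le_pow_left₀ (norm_nonneg w) (h a ha) 2
  exact div_nonpos_of_nonpos_of_nonneg (sub_nonpos.2 this) (by positivity)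

theorem le_re_mul_eval_derivative_div_eval {p : ℂ[X]} {w : ℂ} (hw : p.eval w ≠ 0)
    (h : ∀ a ∈ p.roots, ‖a‖ ≤ ‖w‖) :
    p.natDegree / 2 ≤ (w * (p.derivative.eval w / p.eval w)).re := by
  rw [re_mul_eval_derivative_div_eval hw, (IsAlgClosed.splits p).natDegree_eq_card_roots]
  refine Eq.trans_le (by simp [div_eq_mul_inv]) (Multiset.card_nsmul_le_sum (a := 1 / 2) ?_)
  simp only [Multiset.forall_mem_map_iff]
  intro a ha
  have hne : w ≠ a := fun hwa ↦ hw (hwa ▸ isRoot_of_mem_roots ha)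
  rw [re_div_sub_eq hne, le_add_iff_nonneg_right]
  have := pow_le_pow_left₀ (norm_nonneg a) (h a ha) 2
  exact div_nonneg (sub_nonneg.2 this) (by positivity)

-- If the derivative vanished too, `w p' / p` would equal `1 + w r' / r`. But the real part of
-- `w p' / p` is at most half the degree of `p`, and that of `w r' / r` at least half that of `r`.
theorem eval_derivative_add_X_mul_ne_zero {p r : ℂ[X]} {w : ℂ}
    (hdeg : p.natDegree ≤ r.natDegree) (hp : ∀ a ∈ p.roots, ‖w‖ ≤ ‖a‖)
    (hr : ∀ a ∈ r.roots, ‖a‖ ≤ ‖w‖) (hpw : p.eval w ≠ 0) (hw : (p + X * r).eval w = 0) :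
    (p + X * r).derivative.eval w ≠ 0 := by
  intro hd
  simp only [derivative_add, derivative_mul, derivative_X, one_mul, eval_add, eval_mul, eval_X]
    at hw hd
  have hpr : p.eval w = -(w * r.eval w) := eq_neg_of_add_eq_zero_left hw
  obtain ⟨hw0, hrw⟩ := mul_ne_zero_iff.1 (neg_ne_zero.1 (hpr ▸ hpw))
  have hlog : w * (p.derivative.eval w / p.eval w) =
      1 + w * (r.derivative.eval w / r.eval w) := by
    rw [hpr]
    field_simp
    linear_combination -hd
  have hle := re_mul_eval_derivative_div_eval_le hpw hp
  have hge := le_re_mul_eval_derivative_div_eval hrw hr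
  rw [hlog, Complex.add_re, Complex.one_re] at hle
  have hdeg' : (p.natDegree : ℝ) ≤ r.natDegree := Nat.cast_le.2 hdeg
  linarith

theorem nodup_roots_of_eval_derivative_ne_zero {R : Type*} [CommRing R] [IsDomain R] {p : R[X]}
    (h : ∀ a ∈ p.roots, p.derivative.eval a ≠ 0) : p.roots.Nodup := by
  classical
  refine Multiset.nodup_iff_count_le_one.2 fun a ↦ ?_
  rw [count_roots]
  by_contra! hlt
  have hp : p ≠ 0 := by rintro rfl; simp at hlt
  obtain ⟨ha, hda⟩ := (one_lt_rootMultiplicity_iff_isRoot hp).1 hlt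
  exact h a ((mem_roots hp).2 ha) hda

theorem norm_sub_smul_le_norm_smul_sub {E : Type*} [NormedAddCommGroup E] [InnerProductSpace ℝ E]
    {q : ℝ} (hq : |q| ≤ 1) {x y : E} (h : ‖x‖ ≤ ‖y‖) : ‖x - q • y‖ ≤ ‖q • x - y‖ := by
  have hdiff : ‖q • x - y‖ ^ 2 - ‖x - q • y‖ ^ 2 = (1 - q ^ 2) * (‖y‖ ^ 2 - ‖x‖ ^ 2) := by
    rw [norm_sub_sq_real, norm_sub_sq_real, norm_smul, norm_smul, mul_pow, mul_pow,
      Real.norm_eq_abs, sq_abs, real_inner_smul_left, real_inner_smul_right]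
    ring
  have hq2 : 0 ≤ 1 - q ^ 2 := sub_nonneg.2 ((sq_le_one_iff_abs_le_one q).2 hq)
  have hxy : 0 ≤ ‖y‖ ^ 2 - ‖x‖ ^ 2 := sub_nonneg.2 (pow_le_pow_left₀ (norm_nonneg x) h 2)
  exact le_of_sq_le_sq (sub_nonneg.1 (hdiff ▸ mul_nonneg hq2 hxy)) (norm_nonneg _)

section ScaleRoots

variable {q : ℝ} {p : ℂ[X]} {w : ℂ}

theorem norm_eval_ofReal_mul (q : ℝ) (p : ℂ[X]) (w : ℂ) :
    ‖p.eval (q * w)‖ = ‖p.leadingCoeff‖ * (p.roots.map fun a ↦ ‖q • w - a‖).prod := by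
  rw [(IsAlgClosed.splits p).eval_eq_prod_roots, norm_mul, ← normHom_apply (Multiset.prod _),
    map_multiset_prod, Multiset.map_map]
  rfl

theorem norm_eval_scaleRoots (hq : q ≠ 0) (p : ℂ[X]) (w : ℂ) :
    ‖(p.scaleRoots (q : ℂ)).eval w‖ =
      ‖p.leadingCoeff‖ * (p.roots.map fun a ↦ ‖w - q • a‖).prod := by
  rw [(IsAlgClosed.splits _).eval_eq_prod_roots, leadingCoeff_scaleRoots,
    roots_scaleRoots p (Complex.ofReal_ne_zero.2 hq).isUnit, norm_mul,
    ← normHom_apply (Multiset.prod _), map_multiset_prod, Multiset.map_map, Multiset.map_map]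
  rfl

theorem norm_eval_scaleRoots_le (hq : q ≠ 0) (hq1 : |q| ≤ 1) (h : ∀ a ∈ p.roots, ‖w‖ ≤ ‖a‖) :
    ‖(p.scaleRoots (q : ℂ)).eval w‖ ≤ ‖p.eval (q * w)‖ := by
  rw [norm_eval_ofReal_mul, norm_eval_scaleRoots hq]
  gcongr
  exact Multiset.prod_map_le_prod_map₀ _ _ (fun _ _ ↦ norm_nonneg _)
    fun a ha ↦ norm_sub_smul_le_norm_smul_sub hq1 (h a ha)

theorem le_norm_eval_scaleRoots (hq : q ≠ 0) (hq1 : |q| ≤ 1) (h : ∀ a ∈ p.roots, ‖a‖ ≤ ‖w‖) :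
    ‖p.eval (q * w)‖ ≤ ‖(p.scaleRoots (q : ℂ)).eval w‖ := by
  rw [norm_eval_ofReal_mul, norm_eval_scaleRoots hq]
  gcongr
  refine Multiset.prod_map_le_prod_map₀ _ _ (fun _ _ ↦ norm_nonneg _) fun a ha ↦ ?_
  rw [norm_sub_rev, norm_sub_rev w]
  exact norm_sub_smul_le_norm_smul_sub hq1 (h a ha)

end ScaleRoots

/-- The operation `p(X) ↦ p(qX) + qⁿ X p(X/q)` on polynomials of degree `n`. It takes the Lee-Yang
polynomial of the complete graph on `n` vertices to that of the complete graph on `n + 1` vertices.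
The second term is written with `scaleRoots`, which avoids dividing by `q`. -/
noncomputable def addSite {R : Type*} [CommSemiring R] (q : R) (p : R[X]) : R[X] :=
  p.comp (C q * X) + X * p.scaleRoots q

section AddSite

variable {R : Type*} [CommSemiring R]

theorem eval_addSite (q : R) (p : R[X]) (w : R) :
    (addSite q p).eval w = p.eval (q * w) + w * (p.scaleRoots q).eval w := by
  simp [addSite]

theorem natDegree_comp_C_mul_X_le (q : R) (p : R[X]) :
    (p.comp (C q * X)).natDegree ≤ p.natDegree :=
  natDegree_le_iff_coeff_eq_zero.2 fun k hk ↦ by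
    rw [comp_C_mul_X_coeff, coeff_eq_zero_of_natDegree_lt hk, zero_mul]

theorem degree_comp_C_mul_X_lt_degree_X_mul_scaleRoots [Nontrivial R] (q : R) {p : R[X]}
    (hp : p ≠ 0) :
    (p.comp (C q * X)).degree < (X * p.scaleRoots q).degree := by
  refine degree_lt_degree ?_
  rw [natDegree_X_mul (scaleRoots_ne_zero hp q), natDegree_scaleRoots]
  exact Nat.lt_succ_of_le (natDegree_comp_C_mul_X_le q p)

theorem natDegree_addSite [Nontrivial R] (q : R) {p : R[X]} (hp : p ≠ 0) :
    (addSite q p).natDegree = p.natDegree + 1 := by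
  rw [addSite,
    natDegree_add_eq_right_of_degree_lt (degree_comp_C_mul_X_lt_degree_X_mul_scaleRoots q hp),
    natDegree_X_mul (scaleRoots_ne_zero hp q), natDegree_scaleRoots]

theorem monic_addSite (q : R) {p : R[X]} (hp : p.Monic) : (addSite q p).Monic := by
  nontriviality R
  exact (monic_X.mul ((monic_scaleRoots_iff q).2 hp)).add_of_right
    (degree_comp_C_mul_X_lt_degree_X_mul_scaleRoots q hp.ne_zero)

theorem map_addSite {S : Type*} [CommSemiring S] (f : R →+* S) (q : R) {p : R[X]}
    (hp : f p.leadingCoeff ≠ 0) : (addSite q p).map f = addSite (f q) (p.map f) := by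
  simp [addSite, Polynomial.map_comp, map_scaleRoots p q f hp]

end AddSite

section CircleTheorem

variable {q : ℝ} {p : ℂ[X]} {w : ℂ}

theorem eval_mul_ne_zero_of_norm_le_one (hq1 : |q| < 1) (hp0 : p ≠ 0)
    (hp : ∀ a ∈ p.roots, ‖a‖ = 1) (hw : ‖w‖ ≤ 1) : p.eval (q * w) ≠ 0 := fun h0 ↦ by
  have hnorm := hp _ ((mem_roots hp0).2 h0)
  rw [norm_mul, Complex.norm_real, Real.norm_eq_abs] at hnorm
  exact (mul_lt_one_of_nonneg_of_lt_one_left (abs_nonneg q) hq1 hw).ne hnorm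

theorem norm_lt_one_of_mem_roots_scaleRoots (hq : q ≠ 0) (hq1 : |q| < 1)
    (hp : ∀ a ∈ p.roots, ‖a‖ = 1) (hw : w ∈ (p.scaleRoots (q : ℂ)).roots) : ‖w‖ < 1 := by
  rw [roots_scaleRoots p (Complex.ofReal_ne_zero.2 hq).isUnit, Multiset.mem_map] at hw
  obtain ⟨a, ha, rfl⟩ := hw
  rwa [norm_mul, hp a ha, mul_one, Complex.norm_real, Real.norm_eq_abs]

theorem norm_eq_one_of_mem_roots_addSite (hq : q ≠ 0) (hq1 : |q| < 1)
    (hp : ∀ a ∈ p.roots, ‖a‖ = 1) (hw : w ∈ (addSite (q : ℂ) p).roots) : ‖w‖ = 1 := by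
  have hp0 : p ≠ 0 := by rintro rfl; simp [addSite] at hw
  have hnorm : ‖p.eval (q * w)‖ = ‖w‖ * ‖(p.scaleRoots (q : ℂ)).eval w‖ := by
    have hw0 : (addSite (q : ℂ) p).eval w = 0 := isRoot_of_mem_roots hw
    rw [eval_addSite] at hw0
    rw [eq_neg_of_add_eq_zero_left hw0, norm_neg, norm_mul]
  refine le_antisymm (not_lt.1 fun hgt ↦ ?_) (not_lt.1 fun hlt ↦ ?_)
  · have hB : 0 < ‖(p.scaleRoots (q : ℂ)).eval w‖ := norm_pos_iff.2 fun h0 ↦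
      (norm_lt_one_of_mem_roots_scaleRoots hq hq1 hp
        ((mem_roots (scaleRoots_ne_zero hp0 _)).2 h0)).not_gt hgt
    have hle := le_norm_eval_scaleRoots hq hq1.le fun a ha ↦ (hp a ha).trans_le hgt.le
    exact hle.not_gt (hnorm ▸ lt_mul_of_one_lt_left hB hgt)
  · have hA : 0 < ‖p.eval (q * w)‖ :=
      norm_pos_iff.2 (eval_mul_ne_zero_of_norm_le_one hq1 hp0 hp hlt.le)
    have hB : 0 < ‖(p.scaleRoots (q : ℂ)).eval w‖ :=
      pos_of_mul_pos_right (hnorm ▸ hA) (norm_nonneg w)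
    have hle := norm_eval_scaleRoots_le hq hq1.le fun a ha ↦ hlt.le.trans_eq (hp a ha).symm
    exact hle.not_gt (hnorm ▸ mul_lt_of_lt_one_left hB hlt)

theorem nodup_roots_addSite (hq : q ≠ 0) (hq1 : |q| < 1)
    (hp : ∀ a ∈ p.roots, ‖a‖ = 1) : (addSite (q : ℂ) p).roots.Nodup := by
  refine nodup_roots_of_eval_derivative_ne_zero fun w hw ↦ ?_
  have hp0 : p ≠ 0 := by rintro rfl; simp [addSite] at hw
  have hw1 := norm_eq_one_of_mem_roots_addSite hq hq1 hp hw
  refine eval_derivative_add_X_mul_ne_zero ?_ (fun a ha ↦ ?_) (fun a ha ↦ ?_) ?_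
    (isRoot_of_mem_roots hw)
  · rw [natDegree_scaleRoots]
    exact natDegree_comp_C_mul_X_le _ p
  · have ha0 : p.eval (q * a) = 0 := by simpa using isRoot_of_mem_roots ha
    exact hw1.trans_le
      (not_lt.1 fun hlt ↦ eval_mul_ne_zero_of_norm_le_one hq1 hp0 hp hlt.le ha0)
  · exact (norm_lt_one_of_mem_roots_scaleRoots hq hq1 hp ha).le.trans_eq hw1.symm
  · simpa using eval_mul_ne_zero_of_norm_le_one hq1 hp0 hp hw1.le

end CircleTheorem

/-- The Lee-Yang polynomial `∑ₖ (n choose k) q ^ (k (n - k)) X ^ k` of the complete graph on `n`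
vertices, built up one vertex at a time. -/
noncomputable def leeYang {R : Type*} [CommSemiring R] (q : R) : ℕ → R[X]
  | 0 => 1
  | n + 1 => addSite q (leeYang q n)

namespace leeYang

section Semiring

variable {R S : Type*} [CommSemiring R] [CommSemiring S]

theorem monic (q : R) (n : ℕ) : (leeYang q n).Monic := by
  induction n with
  | zero => exact monic_one
  | succ n ih => exact monic_addSite q ih

theorem natDegree_eq [Nontrivial R] (q : R) (n : ℕ) : (leeYang q n).natDegree = n := by
  induction n with
  | zero => exact natDegree_one
  | succ n ih => rw [leeYang, natDegree_addSite q (monic q n).ne_zero, ih]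

theorem map_eq [Nontrivial S] (f : R →+* S) (q : R) (n : ℕ) :
    (leeYang q n).map f = leeYang (f q) n := by
  induction n with
  | zero => exact Polynomial.map_one f
  | succ n ih =>
    have hlead : f (leeYang q n).leadingCoeff ≠ 0 := by
      rw [monic q n, map_one]
      exact one_ne_zero
    rw [leeYang, map_addSite f q hlead, ih, leeYang]

end Semiring

theorem eval_pos {q x : ℝ} (hq : 0 < q) (hx : 0 < x) (n : ℕ) : 0 < (leeYang q n).eval x := by
  induction n generalizing x with
  | zero => simp [leeYang]
  | succ n ih =>
    have hscale : ((leeYang q n).scaleRoots q).eval x =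
        q ^ (leeYang q n).natDegree * (leeYang q n).eval (x / q) := by
      rw [← scaleRoots_eval_mul, mul_div_cancel₀ _ hq.ne']
    rw [leeYang, eval_addSite, hscale]
    have h1 := ih (mul_pos hq hx)
    have h2 := ih (div_pos hx hq)
    positivity

theorem norm_eq_one_of_mem_roots {q : ℝ} (hq : q ≠ 0) (hq1 : |q| < 1) (n : ℕ) :
    ∀ w ∈ (leeYang (q : ℂ) n).roots, ‖w‖ = 1 := by
  induction n with
  | zero => simp [leeYang]
  | succ n ih => exact fun w ↦ norm_eq_one_of_mem_roots_addSite hq hq1 ih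

theorem nodup_roots {q : ℝ} (hq : q ≠ 0) (hq1 : |q| < 1) (n : ℕ) :
    (leeYang (q : ℂ) n).roots.Nodup := by
  cases n with
  | zero => simp [leeYang]
  | succ n => exact nodup_roots_addSite hq hq1 (norm_eq_one_of_mem_roots hq hq1 n)

theorem card_toFinset_roots {q : ℝ} (hq : q ≠ 0) (hq1 : |q| < 1) (n : ℕ) :
    (leeYang (q : ℂ) n).roots.toFinset.card = n := by
  rw [Multiset.toFinset_card_of_nodup (nodup_roots hq hq1 n),
    ← (IsAlgClosed.splits _).natDegree_eq_card_roots, natDegree_eq]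

theorem eval_conj (q : ℝ) (n : ℕ) (w : ℂ) :
    (leeYang (q : ℂ) n).eval (starRingEnd ℂ w) = starRingEnd ℂ ((leeYang (q : ℂ) n).eval w) := by
  rw [← Complex.coe_algebraMap, ← map_eq, eval_map_algebraMap, eval_map_algebraMap, aeval_conj]

theorem eval_one_ne_zero {q : ℝ} (hq : 0 < q) (n : ℕ) : (leeYang (q : ℂ) n).eval 1 ≠ 0 := by
  rw [← Complex.coe_algebraMap, ← map_eq, eval_one_map]
  exact Complex.ofReal_ne_zero.2 (eval_pos hq one_pos n).ne'

end leeYang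

section Count

open Finset

theorem card_filter_im_neg_eq {s : Finset ℂ} (hs : ∀ w ∈ s, starRingEnd ℂ w ∈ s) :
    #{w ∈ s | w.im < 0} = #{w ∈ s | 0 < w.im} :=
  card_nbij' (starRingEnd ℂ) (starRingEnd ℂ) (by simp +contextual [Set.MapsTo, hs])
    (by simp +contextual [Set.MapsTo, hs]) (by simp [Set.LeftInvOn]) (by simp [Set.LeftInvOn])

theorem two_mul_card_filter_im_pos_add_card_filter_im_eq_zero {s : Finset ℂ}
    (hs : ∀ w ∈ s, starRingEnd ℂ w ∈ s) :
    2 * #{w ∈ s | 0 < w.im} + #{w ∈ s | w.im = 0} = #s := by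
  have hpos := card_filter_add_card_filter_not (s := s) (0 < ·.im)
  have hneg := card_filter_add_card_filter_not (s := {w ∈ s | ¬ 0 < w.im}) (·.im < 0)
  have hlt : {w ∈ s | ¬ 0 < w.im ∧ w.im < 0} = {w ∈ s | w.im < 0} :=
    filter_congr fun w _ ↦ and_iff_right_of_imp fun h ↦ h.not_gt
  have heq : {w ∈ s | ¬ 0 < w.im ∧ ¬ w.im < 0} = {w ∈ s | w.im = 0} :=
    filter_congr fun w _ ↦ by rw [not_lt, not_lt, ← le_antisymm_iff]
  rw [filter_filter, filter_filter, hlt, heq, card_filter_im_neg_eq hs] at hneg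
  lia

theorem eq_one_or_eq_neg_one_of_norm_eq_one_of_im_eq_zero {w : ℂ} (hw : ‖w‖ = 1) (him : w.im = 0) :
    w = 1 ∨ w = -1 := by
  have hre : w = w.re := Complex.ext rfl him
  rw [hre, Complex.norm_real, Real.norm_eq_abs, abs_eq zero_le_one] at hw
  rw [hre]
  exact_mod_cast hw

theorem filter_im_eq_zero_eq_of_norm_eq_one {s : Finset ℂ} (hs : ∀ w ∈ s, ‖w‖ = 1)
    (h1 : 1 ∉ s) : {w ∈ s | w.im = 0} = {w ∈ s | w = -1} := by
  refine filter_congr fun w hw ↦ ⟨fun him ↦ ?_, fun h ↦ by simp [h]⟩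
  exact (eq_one_or_eq_neg_one_of_norm_eq_one_of_im_eq_zero (hs w hw) him).resolve_left
    fun h ↦ h1 (h ▸ hw)

theorem leeYang.two_mul_card_filter_im_pos_add {q : ℝ} (hq : 0 < q) (hq1 : q < 1) (n : ℕ) :
    2 * #{w ∈ (leeYang (q : ℂ) n).roots.toFinset | 0 < w.im} +
      (if (leeYang (q : ℂ) n).eval (-1) = 0 then 1 else 0) = n := by
  set s := (leeYang (q : ℂ) n).roots.toFinset
  have hq1' : |q| < 1 := by rwa [abs_of_pos hq]
  have mem_s (w : ℂ) : w ∈ s ↔ (leeYang (q : ℂ) n).eval w = 0 := by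
    rw [Multiset.mem_toFinset, mem_roots (monic _ n).ne_zero, IsRoot.def]
  have hconj : ∀ w ∈ s, starRingEnd ℂ w ∈ s := fun w hw ↦ by
    rw [mem_s] at hw ⊢
    rw [eval_conj, hw, map_zero]
  have hnorm : ∀ w ∈ s, ‖w‖ = 1 := fun w hw ↦
    norm_eq_one_of_mem_roots hq.ne' hq1' n w (Multiset.mem_toFinset.1 hw)
  have h1 : 1 ∉ s := (mem_s 1).not.2 (eval_one_ne_zero hq n)
  have hcard := two_mul_card_filter_im_pos_add_card_filter_im_eq_zero hconj
  rw [filter_im_eq_zero_eq_of_norm_eq_one hnorm h1, filter_eq', apply_ite card, card_singleton,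
    card_empty, card_toFinset_roots hq.ne' hq1' n] at hcard
  simpa only [mem_s] using hcard

end Count

theorem bijOn_exp_ofReal_mul_I :
    Set.BijOn (fun θ : ℝ ↦ Complex.exp (θ * Complex.I)) (Set.Ioo 0 π) {w | ‖w‖ = 1 ∧ 0 < w.im} := by
  refine Set.InvOn.bijOn (f' := Complex.arg) ⟨fun θ hθ ↦ ?_, fun w hw ↦ ?_⟩ (fun θ hθ ↦ ?_)
    fun w hw ↦ ?_
  · change (Complex.exp (θ * Complex.I)).arg = θ
    rw [Complex.exp_mul_I]
    exact Complex.arg_cos_add_sin_mul_I ⟨by linarith [hθ.1, Real.pi_pos], hθ.2.le⟩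
  · simpa [hw.1] using Complex.norm_mul_exp_arg_mul_I w
  · refine ⟨Complex.norm_exp_ofReal_mul_I θ, ?_⟩
    rw [Complex.exp_ofReal_mul_I_im]
    exact Real.sin_pos_of_mem_Ioo hθ
  · refine ⟨(Complex.arg_nonneg_iff.2 hw.2.le).lt_of_ne' fun h ↦ ?_,
      Complex.arg_lt_pi_iff.2 (.inr hw.2.ne')⟩
    exact hw.2.ne' (Complex.arg_eq_zero_iff.1 h).2

theorem bijOn_exp_two_mul_ofReal_mul_I :
    Set.BijOn (fun x : ℝ ↦ Complex.exp (2 * x * Complex.I)) (Set.Ioo 0 (π / 2))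
      {w | ‖w‖ = 1 ∧ 0 < w.im} := by
  have hdouble : Set.BijOn (fun x : ℝ ↦ 2 * x) (Set.Ioo 0 (π / 2)) (Set.Ioo 0 π) := by
    refine ⟨fun x hx ↦ ⟨by linarith [hx.1], by linarith [hx.2]⟩,
      fun x _ y _ h ↦ mul_left_cancel₀ two_ne_zero h,
      fun θ hθ ↦ ⟨θ / 2, ⟨by linarith [hθ.1], by linarith [hθ.2]⟩, mul_div_cancel₀ θ two_ne_zero⟩⟩
  exact (bijOn_exp_ofReal_mul_I.comp hdouble).congr fun x _ ↦ by simp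

section PartitionFunction

open Complex

theorem spin_sq (b : Bool) : spin b ^ 2 = 1 := by cases b <;> norm_num [spin]

theorem CWZ_succ (n : ℕ) (t x : ℂ) :
    CWZ (n + 1) t x = exp t *
      (exp (I * x) * CWZ n t (x - 2 * I * t) + exp (-(I * x)) * CWZ n t (x + 2 * I * t)) := by
  have hsplit (b : Bool) (s : ℂ) :
      exp (t * (spin b + s) ^ 2 + I * x * (spin b + s)) =
        exp t * (exp (spin b * (I * x)) *
          exp (t * s ^ 2 + I * (x - spin b * (2 * I * t)) * s)) := by
    have hsq : (spin b : ℂ) ^ 2 = 1 := mod_cast spin_sq b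
    rw [← exp_add, ← exp_add]
    congr 1
    linear_combination t * hsq + 2 * spin b * t * s * I_sq
  simp only [CWZ, ← (Fin.consEquiv fun _ ↦ Bool).sum_comp, Fintype.sum_prod_type, Fintype.sum_bool,
    Fin.consEquiv_apply, Fin.sum_univ_succ, Fin.cons_zero, Fin.cons_succ, ofReal_add, hsplit,
    ← Finset.mul_sum]
  simp [spin, mul_add]

theorem CWZ_eq_exp_mul_eval_leeYang (n : ℕ) (t x : ℂ) :
    CWZ n t x = exp (t * n ^ 2 - I * x * n) *
      (leeYang (exp (-4 * t)) n).eval (exp (2 * x * I)) := by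
  induction n generalizing x with
  | zero => simp [CWZ, leeYang]
  | succ n ih =>
    set q := exp (-4 * t) with hq
    set w := exp (2 * x * I) with hw
    have hout : exp (2 * (x - 2 * I * t) * I) = w / q := by
      rw [← exp_sub]
      congr 1
      linear_combination (-4 * t) * I_sq
    have hin : exp (2 * (x + 2 * I * t) * I) = q * w := by
      rw [← exp_add]
      congr 1
      linear_combination (4 * t) * I_sq
    have hscale : ((leeYang q n).scaleRoots q).eval w = q ^ n * (leeYang q n).eval (w / q) := by
      have h := scaleRoots_eval_mul (leeYang q n) (w / q) q
      rwa [mul_div_cancel₀ w (exp_ne_zero _), leeYang.natDegree_eq] at h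
    have hplus : exp t * (exp (I * x) * exp (t * n ^ 2 - I * (x - 2 * I * t) * n)) =
        exp (t * (n + 1 : ℕ) ^ 2 - I * x * (n + 1 : ℕ)) * (w * q ^ n) := by
      rw [hq, hw, ← exp_nat_mul]
      simp only [← exp_add]
      congr 1
      push_cast
      linear_combination 2 * t * n * I_sq
    have hminus : exp t * (exp (-(I * x)) * exp (t * n ^ 2 - I * (x + 2 * I * t) * n)) =
        exp (t * (n + 1 : ℕ) ^ 2 - I * x * (n + 1 : ℕ)) := by
      simp only [← exp_add]
      congr 1
      push_cast
      linear_combination -2 * t * n * I_sq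
    rw [CWZ_succ, ih, ih, hout, hin, leeYang, eval_addSite, hscale]
    linear_combination (leeYang q n).eval (w / q) * hplus + (leeYang q n).eval (q * w) * hminus

theorem CWZ_eq_zero_iff (n : ℕ) (t : ℝ) (x : ℂ) :
    CWZ n t x = 0 ↔ (leeYang (Real.exp (-4 * t) : ℂ) n).eval (exp (2 * x * I)) = 0 := by
  rw [CWZ_eq_exp_mul_eval_leeYang, mul_eq_zero_iff_left (exp_ne_zero _), ofReal_exp, ofReal_mul,
    ofReal_neg, ofReal_ofNat]

theorem CWZ_pi_div_two_eq_zero_iff (n : ℕ) (t : ℝ) :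
    CWZ n t ((π / 2 : ℝ) : ℂ) = 0 ↔ (leeYang (Real.exp (-4 * t) : ℂ) n).eval (-1) = 0 := by
  rw [CWZ_eq_zero_iff, ofReal_div, ofReal_ofNat, mul_div_cancel₀ _ two_ne_zero, exp_pi_mul_I]

theorem encard_CWZ_zeros (n : ℕ) {t : ℝ} (ht : 0 < t) :
    {z : ℝ | z ∈ Set.Ioo 0 (π / 2) ∧ CWZ n t z = 0}.encard =
      {w ∈ (leeYang (Real.exp (-4 * t) : ℂ) n).roots.toFinset | 0 < w.im}.card := by
  set q := Real.exp (-4 * t) with hq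
  have hq1 : |q| < 1 := by
    rw [Real.abs_exp]
    exact Real.exp_lt_one_iff.2 (by linarith)
  have hzeros : {z : ℝ | z ∈ Set.Ioo 0 (π / 2) ∧ CWZ n t z = 0} = Set.Ioo 0 (π / 2) ∩
      (fun x : ℝ ↦ exp (2 * x * I)) ⁻¹' {w | (leeYang (q : ℂ) n).eval w = 0} := by
    ext z
    simp [CWZ_eq_zero_iff, hq]
  have hroots : {w : ℂ | ‖w‖ = 1 ∧ 0 < w.im} ∩ {w | (leeYang (q : ℂ) n).eval w = 0} =
      {w ∈ (leeYang (q : ℂ) n).roots.toFinset | 0 < w.im} := by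
    ext w
    have hnorm := leeYang.norm_eq_one_of_mem_roots (Real.exp_pos _).ne' hq1 n w
    rw [mem_roots (leeYang.monic _ n).ne_zero] at hnorm
    rw [Finset.mem_coe, Finset.mem_filter, Multiset.mem_toFinset,
      mem_roots (leeYang.monic _ n).ne_zero]
    exact ⟨fun ⟨⟨_, him⟩, hw⟩ ↦ ⟨hw, him⟩, fun ⟨hw, him⟩ ↦ ⟨⟨hnorm hw, him⟩, hw⟩⟩
  have hbij := bijOn_exp_two_mul_ofReal_mul_I
  rw [hzeros, ← (hbij.injOn.mono Set.inter_subset_left).encard_image, Set.image_inter_preimage,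
    hbij.image_eq, hroots, Set.encard_coe_eq_coe_finsetCard]

end PartitionFunction

theorem stmt17 (n : ℕ) (hn : 0 < n) (t : ℝ) (ht : 0 < t) :
    (Even n →
      {z : ℝ | z ∈ Set.Ioo 0 (π / 2) ∧ CWZ n t z = 0}.encard = (n / 2 : ℕ) ∧
        CWZ n t ((π / 2 : ℝ) : ℂ) ≠ 0) ∧
    (Odd n →
      {z : ℝ | z ∈ Set.Ioo 0 (π / 2) ∧ CWZ n t z = 0}.encard = ((n - 1) / 2 : ℕ) ∧
        CWZ n t ((π / 2 : ℝ) : ℂ) = 0) := by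
  have hcount := leeYang.two_mul_card_filter_im_pos_add (Real.exp_pos (-4 * t))
    (Real.exp_lt_one_iff.2 (by linarith)) n
  rw [encard_CWZ_zeros n ht, ne_eq, CWZ_pi_div_two_eq_zero_iff, Nat.cast_inj, Nat.cast_inj]
  split_ifs at hcount with hroot
  · exact ⟨fun ⟨m, hm⟩ ↦ by lia, fun _ ↦ ⟨by lia, hroot⟩⟩
  · exact ⟨fun _ ↦ ⟨by lia, hroot⟩, fun ⟨m, hm⟩ ↦ by lia⟩
end
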